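/- Let ρ be a density operator and σ a positive definite density operator on a finite-dimensional complex Hilbert space, and let α > 1. Then the Petz–Rényi divergence D_α(ρ‖σ) := (1/(α−1)) log Tr[ρ^α σ^{1−α}] admits the variational expression D_α(ρ‖σ) = sup over operators T with 0 < T ≤ 𝟙 of { (α/(α−1)) log Tr[(T^{α/2} ρ^α T^{α/2})^{1/α}] − log Tr[(T^{α/2} σ^{α−1} T^{α/2})^{1/(α−1)}] }. -/

import Mathlib

open Matrix
open scoped ComplexOrder Kronecker

noncomputable section

/-- Real power of a Hermitian matrix via functional calculus on its support
(Moore–Penrose convention, also for negative powers); junk value `0` for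
non-Hermitian input. -/
def Matrix.rpowH {ι : Type*} [Fintype ι] [DecidableEq ι] (A : Matrix ι ι ℂ) (p : ℝ) :
    Matrix ι ι ℂ :=
  if hA : A.IsHermitian then
    (hA.eigenvectorUnitary : Matrix ι ι ℂ) *
      Matrix.diagonal (fun i => ((hA.eigenvalues i ^ p : ℝ) : ℂ)) *
      star (hA.eigenvectorUnitary : Matrix ι ι ℂ)
  else 0

/-- The operator absolute value `|A| = (A† A)^(1/2)`. -/
def Matrix.absM {ι : Type*} [Fintype ι] [DecidableEq ι] (A : Matrix ι ι ℂ) :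
    Matrix ι ι ℂ :=
  Matrix.rpowH (Aᴴ * A) (2⁻¹ : ℝ)

/-- Real part of the trace. -/
def retr {ι : Type*} [Fintype ι] (A : Matrix ι ι ℂ) : ℝ :=
  (Matrix.trace A).re


namespace PRV

variable {ι : Type*} [Fintype ι] [DecidableEq ι]

/-- Unitary conjugate of a real diagonal matrix. -/
def dU (U : Matrix.unitaryGroup ι ℂ) (d : ι → ℝ) : Matrix ι ι ℂ :=
  (U : Matrix ι ι ℂ) * Matrix.diagonal (fun i => ((d i : ℝ) : ℂ)) * star (U : Matrix ι ι ℂ)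

lemma star_mul_U (U : Matrix.unitaryGroup ι ℂ) :
    star (U : Matrix ι ι ℂ) * (U : Matrix ι ι ℂ) = 1 :=
  (Matrix.mem_unitaryGroup_iff'.1 U.2)

lemma U_mul_star (U : Matrix.unitaryGroup ι ℂ) :
    (U : Matrix ι ι ℂ) * star (U : Matrix ι ι ℂ) = 1 :=
  (Matrix.mem_unitaryGroup_iff.1 U.2)

lemma dU_herm (U : Matrix.unitaryGroup ι ℂ) (d : ι → ℝ) : (dU U d).IsHermitian := by
  unfold dU
  rw [Matrix.IsHermitian, Matrix.conjTranspose_mul, Matrix.conjTranspose_mul,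
    Matrix.star_eq_conjTranspose, Matrix.conjTranspose_conjTranspose,
    Matrix.diagonal_conjTranspose, Matrix.mul_assoc]
  congr 3
  ext i
  simp

lemma dU_mul (U : Matrix.unitaryGroup ι ℂ) (d e : ι → ℝ) :
    dU U d * dU U e = dU U (fun i => d i * e i) := by
  unfold dU
  have : (U : Matrix ι ι ℂ) * Matrix.diagonal (fun i => ((d i : ℝ) : ℂ)) * star (U : Matrix ι ι ℂ)
      * ((U : Matrix ι ι ℂ) * Matrix.diagonal (fun i => ((e i : ℝ) : ℂ)) * star (U : Matrix ι ι ℂ))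
      = (U : Matrix ι ι ℂ) * Matrix.diagonal (fun i => ((d i : ℝ) : ℂ)) *
        (star (U : Matrix ι ι ℂ) * (U : Matrix ι ι ℂ)) *
        Matrix.diagonal (fun i => ((e i : ℝ) : ℂ)) * star (U : Matrix ι ι ℂ) := by
    simp only [Matrix.mul_assoc]
  rw [this, star_mul_U, Matrix.mul_one, Matrix.mul_assoc (U : Matrix ι ι ℂ),
    Matrix.diagonal_mul_diagonal]
  simp

lemma dU_one (U : Matrix.unitaryGroup ι ℂ) : dU U (fun _ => 1) = 1 := by
  simp [dU]

lemma dU_smul (U : Matrix.unitaryGroup ι ℂ) (k : ℝ) (d : ι → ℝ) :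
    dU U (fun i => k * d i) = (k : ℂ) • dU U d := by
  unfold dU
  rw [← Matrix.smul_mul, ← Matrix.mul_smul, ← Matrix.diagonal_smul]
  congr 3
  ext i
  simp

lemma dU_sub (U : Matrix.unitaryGroup ι ℂ) (d e : ι → ℝ) :
    dU U d - dU U e = dU U (fun i => d i - e i) := by
  unfold dU
  rw [← Matrix.sub_mul, ← Matrix.mul_sub, Matrix.diagonal_sub]
  simp

lemma dU_inv (U : Matrix.unitaryGroup ι ℂ) (d : ι → ℝ) (hd : ∀ i, 0 < d i) :
    (dU U d)⁻¹ = dU U (fun i => (d i)⁻¹) := by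
  apply Matrix.inv_eq_right_inv
  rw [dU_mul, ← dU_one U]
  congr 1
  ext i
  exact mul_inv_cancel₀ (hd i).ne'

lemma dU_psd (U : Matrix.unitaryGroup ι ℂ) (d : ι → ℝ) (hd : ∀ i, 0 ≤ d i) :
    (dU U d).PosSemidef := by
  unfold dU
  rw [Matrix.star_eq_conjTranspose]
  apply Matrix.PosSemidef.mul_mul_conjTranspose_same
  rw [Matrix.posSemidef_diagonal_iff]
  intro i
  exact_mod_cast hd i

lemma dU_pd (U : Matrix.unitaryGroup ι ℂ) (d : ι → ℝ) (hd : ∀ i, 0 < d i) :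
    (dU U d).PosDef := by
  unfold dU
  have hU : IsUnit (U : Matrix ι ι ℂ) := ⟨⟨_, _, U_mul_star U, star_mul_U U⟩, rfl⟩
  rw [hU.posDef_star_right_conjugate_iff, Matrix.posDef_diagonal_iff]
  intro i
  exact_mod_cast hd i

lemma dU_charpoly (U : Matrix.unitaryGroup ι ℂ) (d : ι → ℝ) :
    (dU U d).charpoly = (Matrix.diagonal (fun i => ((d i : ℝ) : ℂ))).charpoly := by
  unfold dU
  rw [Matrix.charpoly_mul_comm, ← Matrix.mul_assoc, star_mul_U, Matrix.one_mul]

lemma spec {A : Matrix ι ι ℂ} (hA : A.IsHermitian) :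
    A = dU hA.eigenvectorUnitary hA.eigenvalues := by
  conv_lhs => rw [hA.spectral_theorem, Unitary.conjStarAlgAut_apply]
  rfl

lemma rpowH_spec {A : Matrix ι ι ℂ} (hA : A.IsHermitian) (p : ℝ) :
    Matrix.rpowH A p = dU hA.eigenvectorUnitary (fun i => hA.eigenvalues i ^ p) := by
  rw [Matrix.rpowH, dif_pos hA]; rfl

lemma dU_congr_fun (U V : Matrix.unitaryGroup ι ℂ) (d e : ι → ℝ) (h : dU U d = dU V e)
    (f : ℝ → ℝ) : dU U (fun i => f (d i)) = dU V (fun i => f (e i)) := by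
  have key : ∀ (x y : ι → ℝ), dU U x = dU V y ↔
      star (V : Matrix ι ι ℂ) * (U : Matrix ι ι ℂ) * Matrix.diagonal (fun i => ((x i : ℝ) : ℂ)) =
      Matrix.diagonal (fun i => ((y i : ℝ) : ℂ)) *
        (star (V : Matrix ι ι ℂ) * (U : Matrix ι ι ℂ)) := by
    intro x y
    constructor
    · intro h
      have h2 := congrArg (fun M => star (V : Matrix ι ι ℂ) * M * (U : Matrix ι ι ℂ)) h
      simp only [dU] at h2
      have e1 := star_mul_U U
      have e2 := star_mul_U V
      simp only [Matrix.mul_assoc, e1, Matrix.mul_one] at h2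
      rw [← Matrix.mul_assoc (star (V : Matrix ι ι ℂ)) (V : Matrix ι ι ℂ), e2, Matrix.one_mul] at h2
      rw [Matrix.mul_assoc, h2]
    · intro h
      have h2 := congrArg (fun M => (V : Matrix ι ι ℂ) * M * star (U : Matrix ι ι ℂ)) h
      simp only [dU]
      have e1 := U_mul_star U
      have e2 := U_mul_star V
      simp only [Matrix.mul_assoc, e1, Matrix.mul_one] at h2
      rw [← Matrix.mul_assoc (V : Matrix ι ι ℂ) (star (V : Matrix ι ι ℂ)), e2, Matrix.one_mul] at h2
      rw [Matrix.mul_assoc, h2, Matrix.mul_assoc]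
  rw [key] at h ⊢
  ext i j
  have hij := congrFun (congrFun h i) j
  rw [Matrix.mul_diagonal, Matrix.diagonal_mul] at hij ⊢
  set w := (star (V : Matrix ι ι ℂ) * (U : Matrix ι ι ℂ)) i j
  by_cases hw : w = 0
  · simp [hw]
  · have : ((d j : ℝ) : ℂ) = e i := by
      apply mul_left_cancel₀ hw
      rw [hij, mul_comm]
    have : d j = e i := by exact_mod_cast this
    rw [this, mul_comm]

lemma rpowH_dU (U : Matrix.unitaryGroup ι ℂ) (d : ι → ℝ) (p : ℝ) :
    Matrix.rpowH (dU U d) p = dU U (fun i => d i ^ p) := by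
  rw [rpowH_spec (dU_herm U d)]
  exact (dU_congr_fun _ _ _ _ (spec (dU_herm U d)) (fun x => x ^ p)).symm

lemma retr_dU (U : Matrix.unitaryGroup ι ℂ) (d : ι → ℝ) : retr (dU U d) = ∑ i, d i := by
  unfold retr dU
  rw [Matrix.trace_mul_comm, ← Matrix.mul_assoc, star_mul_U, Matrix.one_mul, Matrix.trace_diagonal]
  simp

lemma retr_rpowH_charpoly {A : Matrix ι ι ℂ} (hA : A.IsHermitian) (d : ι → ℝ)
    (h : A.charpoly = (Matrix.diagonal (fun i => ((d i : ℝ) : ℂ))).charpoly) (p : ℝ) :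
    retr (Matrix.rpowH A p) = ∑ i, d i ^ p := by
  rw [rpowH_spec hA, retr_dU]
  have h1 := hA.roots_charpoly_eq_eigenvalues
  rw [h, Matrix.charpoly_diagonal, Polynomial.roots_prod _ _
    (by simp [Finset.prod_ne_zero_iff, Polynomial.X_sub_C_ne_zero])] at h1
  simp only [Polynomial.roots_X_sub_C, Multiset.bind_singleton] at h1
  have h2 := congrArg (fun s => (s.map (fun z : ℂ => z.re ^ p)).sum) h1
  simp only [Multiset.map_map] at h2
  simpa using h2.symm

lemma retr_mul (V W : Matrix.unitaryGroup ι ℂ) (c g : ι → ℝ) :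
    retr (dU V c * dU W g) = ∑ i, ∑ j, c i * g j *
      Complex.normSq ((star (V : Matrix ι ι ℂ) * (W : Matrix ι ι ℂ)) i j) := by
  set M := star (V : Matrix ι ι ℂ) * (W : Matrix ι ι ℂ) with hM
  have hs : star M = star (W : Matrix ι ι ℂ) * (V : Matrix ι ι ℂ) := by
    rw [hM, star_mul, star_star]
  have : (dU V c * dU W g).trace = (Matrix.diagonal (fun i => ((c i : ℝ) : ℂ)) * M *
      Matrix.diagonal (fun i => ((g i : ℝ) : ℂ)) * star M).trace := by
    unfold dU
    rw [hs, hM, Matrix.mul_assoc (V : Matrix ι ι ℂ), Matrix.mul_assoc (V : Matrix ι ι ℂ),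
      Matrix.trace_mul_comm (V : Matrix ι ι ℂ)]
    simp only [Matrix.mul_assoc]
  unfold retr
  rw [this, Matrix.trace, Complex.re_sum]
  refine Finset.sum_congr rfl fun i _ => ?_
  rw [Matrix.diag_apply, Matrix.mul_apply, Complex.re_sum]
  refine Finset.sum_congr rfl fun j _ => ?_
  rw [Matrix.mul_diagonal, Matrix.diagonal_mul, Matrix.star_apply, Complex.normSq_apply]
  simp
  ring

lemma rowsum (V W : Matrix.unitaryGroup ι ℂ) (i : ι) :
    ∑ j, Complex.normSq ((star (V : Matrix ι ι ℂ) * (W : Matrix ι ι ℂ)) i j) = 1 := by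
  have h := retr_mul V W (Pi.single i 1) (fun _ => 1)
  rw [dU_one, Matrix.mul_one, retr_dU] at h
  simp only [Finset.sum_pi_single', Finset.mem_univ, if_true, mul_one, ← Finset.mul_sum] at h
  rw [Finset.sum_eq_single i (fun b _ hb => by simp [hb]) (by simp), Pi.single_eq_same,
    one_mul] at h
  exact h.symm

lemma colsum (V W : Matrix.unitaryGroup ι ℂ) (j : ι) :
    ∑ i, Complex.normSq ((star (V : Matrix ι ι ℂ) * (W : Matrix ι ι ℂ)) i j) = 1 := by
  have h := retr_mul V W (fun _ => 1) (Pi.single j 1)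
  rw [dU_one, Matrix.one_mul, retr_dU, Finset.sum_comm] at h
  simp only [Finset.sum_pi_single', Finset.mem_univ, if_true, one_mul, ← Finset.mul_sum] at h
  rw [Finset.sum_eq_single j (fun b _ hb => by simp [hb]) (by simp), Pi.single_eq_same,
    one_mul] at h
  exact h.symm

lemma holder {C A : Matrix ι ι ℂ} (hC : C.PosSemidef) (hA : A.PosDef) {α : ℝ} (hα : 1 < α) :
    retr (Matrix.rpowH C α⁻¹) ≤
      (retr (C * A⁻¹)) ^ (α⁻¹) * (retr (Matrix.rpowH A (α - 1)⁻¹)) ^ ((α - 1) / α) := by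
  set V := hC.1.eigenvectorUnitary
  set W := hA.1.eigenvectorUnitary
  set c := hC.1.eigenvalues
  set a := hA.1.eigenvalues
  have hc : ∀ i, 0 ≤ c i := hC.eigenvalues_nonneg
  have ha : ∀ i, 0 < a i := hA.eigenvalues_pos
  set P : ι → ι → ℝ := fun i j =>
    Complex.normSq ((star (V : Matrix ι ι ℂ) * (W : Matrix ι ι ℂ)) i j) with hP
  have hP0 : ∀ i j, 0 ≤ P i j := fun i j => Complex.normSq_nonneg _
  have e1 : retr (Matrix.rpowH C α⁻¹) = ∑ x : ι × ι, P x.1 x.2 * c x.1 ^ α⁻¹ := by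
    rw [rpowH_spec hC.1, retr_dU, Fintype.sum_prod_type]
    refine Finset.sum_congr rfl fun i _ => ?_
    dsimp only [hP]
    rw [← Finset.sum_mul, rowsum, one_mul]
  have e2 : retr (Matrix.rpowH A (α - 1)⁻¹) = ∑ x : ι × ι, P x.1 x.2 * a x.2 ^ (α - 1)⁻¹ := by
    rw [rpowH_spec hA.1, retr_dU, Fintype.sum_prod_type_right]
    refine Finset.sum_congr rfl fun i _ => ?_
    dsimp only [hP]
    rw [← Finset.sum_mul, colsum, one_mul]
  have e3 : retr (C * A⁻¹) = ∑ x : ι × ι, P x.1 x.2 * (c x.1 / a x.2) := by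
    have : C * A⁻¹ = dU V c * dU W (fun i => (a i)⁻¹) := by
      rw [← dU_inv W a ha, ← spec hA.1, ← spec hC.1]
    rw [this, retr_mul, Fintype.sum_prod_type]
    refine Finset.sum_congr rfl fun i _ => Finset.sum_congr rfl fun j _ => ?_
    simp only [hP]
    ring
  have hα0 : 0 < α := by linarith
  have hα1 : 0 < α - 1 := by linarith
  have hpq : α.HolderConjugate (α / (α - 1)) := Real.HolderConjugate.conjExponent hα
  have H := Real.inner_le_Lp_mul_Lq_of_nonneg (s := (Finset.univ : Finset (ι × ι)))
    (f := fun x => (P x.1 x.2 * (c x.1 / a x.2)) ^ α⁻¹)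
    (g := fun x => (P x.1 x.2 * a x.2 ^ (α - 1)⁻¹) ^ ((α - 1) / α)) hpq
    (fun x _ => Real.rpow_nonneg (mul_nonneg (hP0 _ _) (div_nonneg (hc _) (ha _).le)) _)
    (fun x _ => Real.rpow_nonneg (mul_nonneg (hP0 _ _) (Real.rpow_nonneg (ha _).le _)) _)
  rw [e1, e2, e3]
  convert H using 1
  · refine Finset.sum_congr rfl fun x _ => ?_
    have h1 := ha x.2
    rw [Real.mul_rpow (hP0 _ _) (div_nonneg (hc _) (ha _).le),
      Real.mul_rpow (hP0 _ _) (Real.rpow_nonneg (ha _).le _), Real.div_rpow (hc _) (ha _).le,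
      ← Real.rpow_mul (ha _).le]
    have : (α - 1)⁻¹ * ((α - 1) / α) = α⁻¹ := by field_simp
    rw [this]
    have h2 : P x.1 x.2 = P x.1 x.2 ^ α⁻¹ * P x.1 x.2 ^ ((α - 1) / α) := by
      rw [← Real.rpow_add_of_nonneg (hP0 _ _) (by positivity) (by positivity)]
      have : α⁻¹ + (α - 1) / α = 1 := by field_simp; ring
      rw [this, Real.rpow_one]
    have h3 : 0 < a x.2 ^ α⁻¹ := Real.rpow_pos_of_pos h1 _
    conv_lhs => rw [h2]
    field_simp
  · congr 1
    · rw [one_div]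
      congr 1
      refine Finset.sum_congr rfl fun x _ => ?_
      rw [← Real.rpow_mul (mul_nonneg (hP0 _ _) (div_nonneg (hc _) (ha _).le)),
        inv_mul_cancel₀ hα0.ne', Real.rpow_one]
    · rw [one_div_div]
      congr 1
      refine Finset.sum_congr rfl fun x _ => ?_
      rw [← Real.rpow_mul (mul_nonneg (hP0 _ _) (Real.rpow_nonneg (ha _).le _))]
      have : (α - 1) / α * (α / (α - 1)) = 1 := by field_simp
      rw [this, Real.rpow_one]

lemma rpowH_psd {A : Matrix ι ι ℂ} (hA : A.PosSemidef) (p : ℝ) : (Matrix.rpowH A p).PosSemidef := by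
  rw [rpowH_spec hA.1]
  exact dU_psd _ _ fun i => Real.rpow_nonneg (hA.eigenvalues_nonneg i) _

lemma rpowH_pd {A : Matrix ι ι ℂ} (hA : A.PosDef) (p : ℝ) : (Matrix.rpowH A p).PosDef := by
  rw [rpowH_spec hA.1]
  exact dU_pd _ _ fun i => Real.rpow_pos_of_pos (hA.eigenvalues_pos i) _

lemma rpowH_neg {A : Matrix ι ι ℂ} (hA : A.PosDef) (p : ℝ) :
    Matrix.rpowH A (-p) = (Matrix.rpowH A p)⁻¹ := by
  rw [rpowH_spec hA.1, rpowH_spec hA.1,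
    dU_inv _ _ fun i => Real.rpow_pos_of_pos (hA.eigenvalues_pos i) _]
  congr 1
  ext i
  exact Real.rpow_neg (hA.eigenvalues_pos i).le _

lemma rpowH_half {A : Matrix ι ι ℂ} (hA : A.PosDef) (p : ℝ) :
    Matrix.rpowH A (p / 2) * Matrix.rpowH A (p / 2) = Matrix.rpowH A p := by
  rw [rpowH_spec hA.1, rpowH_spec hA.1, dU_mul]
  congr 1
  ext i
  rw [← Real.rpow_add (hA.eigenvalues_pos i), add_halves]

lemma rpowH_one {A : Matrix ι ι ℂ} (hA : A.IsHermitian) : Matrix.rpowH A 1 = A := by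
  rw [rpowH_spec hA]
  simp only [Real.rpow_one]
  exact (spec hA).symm

lemma rpowH_rpowH {A : Matrix ι ι ℂ} (hA : A.PosSemidef) (p q : ℝ) (h : p * q = 1) :
    Matrix.rpowH (Matrix.rpowH A p) q = A := by
  rw [rpowH_spec hA.1, rpowH_dU]
  have : ∀ i, (hA.1.eigenvalues i ^ p) ^ q = hA.1.eigenvalues i := fun i => by
    rw [← Real.rpow_mul (hA.eigenvalues_nonneg i), h, Real.rpow_one]
  simp only [this]
  exact (spec hA.1).symm

lemma rpowH_one_left (p : ℝ) : Matrix.rpowH (1 : Matrix ι ι ℂ) p = 1 := by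
  conv_lhs => rw [← dU_one (1 : Matrix.unitaryGroup ι ℂ)]
  rw [rpowH_dU]
  simp only [Real.one_rpow]
  exact dU_one _

lemma conj_psd {R Y : Matrix ι ι ℂ} (hR : R.PosSemidef) (hY : Y.PosDef) :
    (Y * R * Y).PosSemidef := by
  have := hR.mul_mul_conjTranspose_same Y
  rwa [hY.1.eq] at this

lemma conj_pd {R Y : Matrix ι ι ℂ} (hR : R.PosDef) (hY : Y.PosDef) :
    (Y * R * Y).PosDef := by
  have := (hY.isUnit.posDef_star_right_conjugate_iff (x := R)).2 hR
  rwa [Matrix.star_eq_conjTranspose, hY.1.eq] at this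

lemma trace_conj {R S Y : Matrix ι ι ℂ} (hY : Y.PosDef) :
    retr (Y * R * Y * (Y * S * Y)⁻¹) = retr (R * S⁻¹) := by
  have hd : IsUnit Y.det := (Matrix.isUnit_iff_isUnit_det _).1 hY.isUnit
  unfold retr
  congr 1
  rw [Matrix.mul_inv_rev, Matrix.mul_inv_rev]
  have : Y * R * Y * (Y⁻¹ * (S⁻¹ * Y⁻¹)) = Y * (R * ((Y * Y⁻¹) * (S⁻¹ * Y⁻¹))) := by
    simp only [Matrix.mul_assoc]
  rw [this, Matrix.mul_nonsing_inv _ hd, Matrix.one_mul, Matrix.trace_mul_comm]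
  simp only [Matrix.mul_assoc, Matrix.nonsing_inv_mul _ hd, Matrix.mul_one]

lemma retr_rpowH_nonneg {C : Matrix ι ι ℂ} (hC : C.PosSemidef) (p : ℝ) :
    0 ≤ retr (Matrix.rpowH C p) := by
  rw [rpowH_spec hC.1, retr_dU]
  exact Finset.sum_nonneg fun i _ => Real.rpow_nonneg (hC.eigenvalues_nonneg i) _

lemma retr_rpowH_pos {C : Matrix ι ι ℂ} (hC : C.PosSemidef) (h0 : C ≠ 0) (p : ℝ) :
    0 < retr (Matrix.rpowH C p) := by
  rw [rpowH_spec hC.1, retr_dU]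
  have : ∃ i, hC.1.eigenvalues i ≠ 0 := by
    by_contra! h
    apply h0
    rw [spec hC.1]
    simp [dU, h]
  obtain ⟨i, hi⟩ := this
  exact Finset.sum_pos' (fun i _ => Real.rpow_nonneg (hC.eigenvalues_nonneg i) _)
    ⟨i, Finset.mem_univ _, Real.rpow_pos_of_pos ((hC.eigenvalues_nonneg i).lt_of_ne' hi) _⟩

lemma upper {R S Y : Matrix ι ι ℂ} (hR : R.PosSemidef) (hS : S.PosDef) (hY : Y.PosDef)
    {α : ℝ} (hα : 1 < α) (hβ : 0 < retr (R * S⁻¹)) :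
    α / (α - 1) * Real.log (retr (Matrix.rpowH (Y * R * Y) α⁻¹))
      - Real.log (retr (Matrix.rpowH (Y * S * Y) (α - 1)⁻¹)) ≤
      (α - 1)⁻¹ * Real.log (retr (R * S⁻¹)) := by
  have hα0 : 0 < α := by linarith
  have hα1 : 0 < α - 1 := by linarith
  have hC := conj_psd hR hY
  have hA := conj_pd hS hY
  have H := holder hC hA hα
  rw [trace_conj hY] at H
  have hC0 : Y * R * Y ≠ 0 := by
    intro h
    rw [← trace_conj hY, h] at hβ
    simp [retr] at hβ
  have hL := retr_rpowH_pos hC hC0 α⁻¹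
  have hM : 0 < retr (Matrix.rpowH (Y * S * Y) (α - 1)⁻¹) := by
    apply retr_rpowH_pos hA.posSemidef
    intro h
    rw [← trace_conj hY, h] at hβ
    simp [retr] at hβ
  have H2 := Real.log_le_log hL H
  rw [Real.log_mul (Real.rpow_pos_of_pos hβ _).ne' (Real.rpow_pos_of_pos hM _).ne',
    Real.log_rpow hβ, Real.log_rpow hM] at H2
  have H3 := mul_le_mul_of_nonneg_left H2 (show 0 ≤ α / (α - 1) by positivity)
  have : α / (α - 1) * (α⁻¹ * Real.log (retr (R * S⁻¹)) +
      (α - 1) / α * Real.log (retr (Matrix.rpowH (Y * S * Y) (α - 1)⁻¹))) =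
      (α - 1)⁻¹ * Real.log (retr (R * S⁻¹)) +
        Real.log (retr (Matrix.rpowH (Y * S * Y) (α - 1)⁻¹)) := by
    field_simp
  linarith

lemma lower {R S : Matrix ι ι ℂ} (hR : R.PosSemidef) (hS : S.PosDef)
    {α : ℝ} (hα : 1 < α) (hβ : 0 < retr (R * (S * S)⁻¹)) {ε : ℝ} (hε : 0 < ε) :
    ∃ T : Matrix ι ι ℂ, (T.PosDef ∧ (1 - T).PosSemidef) ∧
      α / (α - 1) * Real.log (retr (R * (S * S)⁻¹))
        - Real.log (retr (R * (S * S)⁻¹) + Fintype.card ι * ε) ≤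
      α / (α - 1) * Real.log (retr (Matrix.rpowH
          (Matrix.rpowH T (α / 2) * R * Matrix.rpowH T (α / 2)) α⁻¹))
      - Real.log (retr (Matrix.rpowH
          (Matrix.rpowH T (α / 2) * (S * S) * Matrix.rpowH T (α / 2)) (α - 1)⁻¹)) := by
  have hα0 : 0 < α := by linarith
  have hα1 : 0 < α - 1 := by linarith
  have hd : IsUnit S.det := (Matrix.isUnit_iff_isUnit_det _).1 hS.isUnit
  have hSi : S⁻¹.PosDef := hS.inv
  have hB := conj_psd hR hSi
  set β := retr (R * (S * S)⁻¹) with hβdef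
  obtain ⟨U, b, hb, hBU⟩ : ∃ (U : Matrix.unitaryGroup ι ℂ) (b : ι → ℝ), (∀ i, 0 ≤ b i) ∧
      S⁻¹ * R * S⁻¹ = dU U b := ⟨_, _, hB.eigenvalues_nonneg, spec hB.1⟩
  have hsum : β = ∑ i, b i := by
    rw [← retr_dU U b, ← hBU, hβdef, Matrix.mul_inv_rev]
    unfold retr
    rw [Matrix.mul_assoc, Matrix.trace_mul_comm S⁻¹]
    simp only [Matrix.mul_assoc]
  have hbe : ∀ i, 0 < b i + ε := fun i => by linarith [hb i]
  have hA : (dU U (fun i => (b i + ε) ^ (α - 1))).PosDef :=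
    dU_pd _ _ fun i => Real.rpow_pos_of_pos (hbe i) _
  set A := dU U (fun i => (b i + ε) ^ (α - 1)) with hAdef
  have hX := conj_pd hA hSi
  obtain ⟨V, x, hx, hXV⟩ : ∃ (V : Matrix.unitaryGroup ι ℂ) (x : ι → ℝ), (∀ i, 0 < x i) ∧
      S⁻¹ * A * S⁻¹ = dU V x := ⟨_, _, hX.eigenvalues_pos, spec hX.1⟩
  have hxs : 0 ≤ ∑ i, x i := Finset.sum_nonneg fun i _ => (hx i).le
  obtain ⟨k, hk, hkx⟩ : ∃ k : ℝ, 0 < k ∧ ∀ i, k * x i ≤ 1 := by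
    refine ⟨(1 + ∑ i, x i)⁻¹, by positivity, fun i => ?_⟩
    have : x i ≤ ∑ i, x i := Finset.single_le_sum (fun i _ => (hx i).le) (Finset.mem_univ i)
    rw [inv_mul_le_iff₀ (by positivity)]
    linarith
  have hkx0 : ∀ i, 0 < k * x i := fun i => mul_pos hk (hx i)
  refine ⟨dU V (fun i => (k * x i) ^ α⁻¹), ⟨dU_pd _ _ fun i => Real.rpow_pos_of_pos (hkx0 i) _, ?_⟩,
    ?_⟩
  · rw [← dU_one V, dU_sub]
    apply dU_psd
    intro i
    have := Real.rpow_le_one (hkx0 i).le (hkx i) (inv_nonneg.2 hα0.le)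
    linarith
  set Y := Matrix.rpowH (dU V (fun i => (k * x i) ^ α⁻¹)) (α / 2) with hY
  have hYpd : Y.PosDef := rpowH_pd (dU_pd _ _ fun i => Real.rpow_pos_of_pos (hkx0 i) _) _
  have hYY : Y * Y = (k : ℂ) • (S⁻¹ * A * S⁻¹) := by
    rw [hY, rpowH_half (dU_pd _ _ fun i => Real.rpow_pos_of_pos (hkx0 i) _), rpowH_dU, hXV,
      ← dU_smul]
    congr 1
    ext i
    rw [← Real.rpow_mul (hkx0 i).le, inv_mul_cancel₀ hα0.ne', Real.rpow_one]
  have c1 : (Y * R * Y).charpoly =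
      (Matrix.diagonal (fun i => ((b i * (k * (b i + ε) ^ (α - 1)) : ℝ) : ℂ))).charpoly := by
    rw [← dU_charpoly U, ← dU_mul, ← hBU, dU_smul, ← hAdef, Matrix.mul_assoc,
      Matrix.charpoly_mul_comm, Matrix.mul_assoc, hYY]
    have : R * (k : ℂ) • (S⁻¹ * A * S⁻¹) = (R * (S⁻¹ * ((k : ℂ) • A))) * S⁻¹ := by
      simp only [Matrix.mul_assoc, Matrix.mul_smul, Matrix.smul_mul]
    rw [this, Matrix.charpoly_mul_comm]
    simp only [Matrix.mul_assoc]
  have c2 : (Y * (S * S) * Y).charpoly =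
      (Matrix.diagonal (fun i => ((k * (b i + ε) ^ (α - 1) : ℝ) : ℂ))).charpoly := by
    rw [← dU_charpoly U, dU_smul, ← hAdef, Matrix.mul_assoc,
      Matrix.charpoly_mul_comm, Matrix.mul_assoc, hYY]
    have : S * S * (k : ℂ) • (S⁻¹ * A * S⁻¹) = S * ((S * S⁻¹) * (((k : ℂ) • A) * S⁻¹)) := by
      simp only [Matrix.mul_assoc, Matrix.mul_smul, Matrix.smul_mul]
    rw [this, Matrix.mul_nonsing_inv _ hd, Matrix.one_mul, Matrix.charpoly_mul_comm,
      Matrix.mul_assoc, Matrix.nonsing_inv_mul _ hd, Matrix.mul_one]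
  have hSS : (S * S).PosSemidef := by
    have := Matrix.posSemidef_self_mul_conjTranspose S
    rwa [hS.1.eq] at this
  rw [retr_rpowH_charpoly (conj_psd hR hYpd).1 _ c1, retr_rpowH_charpoly (conj_psd hSS hYpd).1 _ c2]
  have s2 : ∑ i, (k * (b i + ε) ^ (α - 1)) ^ (α - 1)⁻¹ =
      k ^ (α - 1)⁻¹ * (β + Fintype.card ι * ε) := by
    have : ∀ i, (k * (b i + ε) ^ (α - 1)) ^ (α - 1)⁻¹ = k ^ (α - 1)⁻¹ * (b i + ε) := fun i => by
      rw [Real.mul_rpow hk.le (Real.rpow_nonneg (hbe i).le _), ← Real.rpow_mul (hbe i).le,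
        mul_inv_cancel₀ hα1.ne', Real.rpow_one]
    simp only [this, ← Finset.mul_sum, Finset.sum_add_distrib, hsum]
    simp
  have s1 : k ^ α⁻¹ * β ≤ ∑ i, (b i * (k * (b i + ε) ^ (α - 1))) ^ α⁻¹ := by
    rw [hsum, Finset.mul_sum]
    refine Finset.sum_le_sum fun i _ => ?_
    have e : k ^ α⁻¹ * b i = (k * b i ^ α) ^ α⁻¹ := by
      rw [Real.mul_rpow hk.le (Real.rpow_nonneg (hb i) _), ← Real.rpow_mul (hb i),
        mul_inv_cancel₀ hα0.ne', Real.rpow_one]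
    rw [e]
    apply Real.rpow_le_rpow (mul_nonneg hk.le (Real.rpow_nonneg (hb i) _)) _ (inv_nonneg.2 hα0.le)
    have e2 : b i ^ α = b i * b i ^ (α - 1) := by
      conv_rhs => rw [← Real.rpow_one (b i), ← Real.rpow_mul (hb i), one_mul]
      rw [← Real.rpow_add_of_nonneg (hb i) zero_le_one hα1.le]
      congr 1; ring
    have e3 : b i ^ (α - 1) ≤ (b i + ε) ^ (α - 1) :=
      Real.rpow_le_rpow (hb i) (by linarith) hα1.le
    rw [e2]
    have := mul_le_mul_of_nonneg_left e3 (mul_nonneg hk.le (hb i))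
    linarith
  have hk1 : 0 < k ^ α⁻¹ := Real.rpow_pos_of_pos hk _
  have hk2 : 0 < k ^ (α - 1)⁻¹ := Real.rpow_pos_of_pos hk _
  have l1 := Real.log_le_log (mul_pos hk1 hβ) s1
  have hβ2 : 0 < β + Fintype.card ι * ε := by positivity
  rw [Real.log_mul hk1.ne' hβ.ne', Real.log_rpow hk] at l1
  rw [s2, Real.log_mul hk2.ne' hβ2.ne', Real.log_rpow hk]
  have l2 := mul_le_mul_of_nonneg_left l1 (show 0 ≤ α / (α - 1) by positivity)
  have e4 : α / (α - 1) * (α⁻¹ * Real.log k + Real.log β) =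
    (α - 1)⁻¹ * Real.log k + α / (α - 1) * Real.log β := by field_simp
  linarith

end PRV

/-- variational expression for the Petz–Rényi divergence, `α > 1`.
For a density operator `ρ`, a positive definite density operator `σ`, and `α > 1`:
`D_α(ρ‖σ) = (α-1)⁻¹ log Tr[ρ^α σ^{1-α}]
  = sup_{0 < T ≤ 𝟙} { (α/(α-1)) log Tr[(T^{α/2} ρ^α T^{α/2})^{1/α}]
      - log Tr[(T^{α/2} σ^{α-1} T^{α/2})^{1/(α-1)}] }`. -/
theorem petz_renyi_variational
    {ι : Type*} [Fintype ι] [DecidableEq ι]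
    (ρ σ : Matrix ι ι ℂ)
    (hρ : ρ.PosSemidef) (hρtr : ρ.trace = 1)
    (hσ : σ.PosDef) (hσtr : σ.trace = 1)
    (α : ℝ) (hα : 1 < α) :
    (α - 1)⁻¹ * Real.log (retr (Matrix.rpowH ρ α * Matrix.rpowH σ (1 - α))) =
      ⨆ (T : Matrix ι ι ℂ) (_ : T.PosDef ∧ (1 - T).PosSemidef),
        (α / (α - 1) * Real.log (retr (Matrix.rpowH
            (Matrix.rpowH T (α / 2) * Matrix.rpowH ρ α * Matrix.rpowH T (α / 2)) α⁻¹))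
          - Real.log (retr (Matrix.rpowH
            (Matrix.rpowH T (α / 2) * Matrix.rpowH σ (α - 1) * Matrix.rpowH T (α / 2))
            (α - 1)⁻¹))) := by
  have hα0 : 0 < α := by linarith
  have hα1 : 0 < α - 1 := by linarith
  have hR := PRV.rpowH_psd hρ α
  have hSg := PRV.rpowH_pd hσ (α - 1)
  have hneg : Matrix.rpowH σ (1 - α) = (Matrix.rpowH σ (α - 1))⁻¹ := by
    rw [← PRV.rpowH_neg hσ, neg_sub]
  have hrρ : Matrix.rpowH (Matrix.rpowH ρ α) α⁻¹ = ρ :=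
    PRV.rpowH_rpowH hρ _ _ (mul_inv_cancel₀ hα0.ne')
  have hrσ : Matrix.rpowH (Matrix.rpowH σ (α - 1)) (α - 1)⁻¹ = σ :=
    PRV.rpowH_rpowH hσ.posSemidef _ _ (mul_inv_cancel₀ hα1.ne')
  rw [hneg]
  have hβ : 1 ≤ retr (Matrix.rpowH ρ α * (Matrix.rpowH σ (α - 1))⁻¹) := by
    have H := PRV.holder hR hSg hα
    rw [hrρ, hrσ] at H
    have t1 : retr ρ = 1 := by simp [retr, hρtr]
    have t2 : retr σ = 1 := by simp [retr, hσtr]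
    rw [t1, t2, Real.one_rpow, mul_one] at H
    by_contra! h
    set β := retr (Matrix.rpowH ρ α * (Matrix.rpowH σ (α - 1))⁻¹)
    have hβ0 : 0 ≤ β := by
      have : β = retr (Matrix.rpowH σ (-((α - 1) / 2)) * Matrix.rpowH ρ α *
          Matrix.rpowH σ (-((α - 1) / 2))) := by
        have e : Matrix.rpowH σ (-((α - 1) / 2)) * Matrix.rpowH σ (-((α - 1) / 2)) =
            (Matrix.rpowH σ (α - 1))⁻¹ := by
          rw [PRV.rpowH_neg hσ, ← Matrix.mul_inv_rev, PRV.rpowH_half hσ]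
        simp only [β, retr]
        rw [← e, Matrix.mul_assoc, Matrix.trace_mul_comm (Matrix.rpowH σ (-((α - 1) / 2)))]
        simp only [Matrix.mul_assoc]
      have hp := PRV.conj_psd hR (PRV.rpowH_pd hσ (-((α - 1) / 2)))
      rw [this, ← PRV.rpowH_one hp.1]
      exact PRV.retr_rpowH_nonneg hp 1
    exact absurd H (not_le.2 (Real.rpow_lt_one hβ0 h (inv_pos.2 hα0)))
  have hβ0 : 0 < retr (Matrix.rpowH ρ α * (Matrix.rpowH σ (α - 1))⁻¹) := by linarith
  have hD : 0 ≤ (α - 1)⁻¹ *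
      Real.log (retr (Matrix.rpowH ρ α * (Matrix.rpowH σ (α - 1))⁻¹)) :=
    mul_nonneg (inv_nonneg.2 hα1.le) (Real.log_nonneg hβ)
  have hub : ∀ T : Matrix ι ι ℂ, (⨆ (_ : T.PosDef ∧ (1 - T).PosSemidef),
        (α / (α - 1) * Real.log (retr (Matrix.rpowH
            (Matrix.rpowH T (α / 2) * Matrix.rpowH ρ α * Matrix.rpowH T (α / 2)) α⁻¹))
          - Real.log (retr (Matrix.rpowH
            (Matrix.rpowH T (α / 2) * Matrix.rpowH σ (α - 1) * Matrix.rpowH T (α / 2))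
            (α - 1)⁻¹)))) ≤ (α - 1)⁻¹ *
      Real.log (retr (Matrix.rpowH ρ α * (Matrix.rpowH σ (α - 1))⁻¹)) := by
    intro T
    by_cases hT : T.PosDef ∧ (1 - T).PosSemidef
    · rw [ciSup_pos hT]
      exact PRV.upper hR hSg (PRV.rpowH_pd hT.1 _) hα hβ0
    · haveI : IsEmpty (T.PosDef ∧ (1 - T).PosSemidef) := ⟨hT⟩
      rw [Real.iSup_of_isEmpty]
      exact hD
  apply le_antisymm
  · have hlow : ∀ ε : ℝ, 0 < ε → α / (α - 1) * Real.log (retr (Matrix.rpowH ρ α *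
          (Matrix.rpowH σ (α - 1))⁻¹)) - Real.log (retr (Matrix.rpowH ρ α *
          (Matrix.rpowH σ (α - 1))⁻¹) + Fintype.card ι * ε) ≤
        ⨆ (T : Matrix ι ι ℂ) (_ : T.PosDef ∧ (1 - T).PosSemidef),
        (α / (α - 1) * Real.log (retr (Matrix.rpowH
            (Matrix.rpowH T (α / 2) * Matrix.rpowH ρ α * Matrix.rpowH T (α / 2)) α⁻¹))
          - Real.log (retr (Matrix.rpowH
            (Matrix.rpowH T (α / 2) * Matrix.rpowH σ (α - 1) * Matrix.rpowH T (α / 2))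
            (α - 1)⁻¹))) := by
      intro ε hε
      have h := PRV.lower hR (PRV.rpowH_pd hσ ((α - 1) / 2)) hα
        (by rw [PRV.rpowH_half hσ]; exact hβ0) hε
      rw [PRV.rpowH_half hσ] at h
      obtain ⟨T, hT, hle⟩ := h
      refine hle.trans (le_trans (le_of_eq ?_) (le_ciSup ⟨_, Set.forall_mem_range.2 hub⟩ T))
      rw [ciSup_pos hT]
    set β := retr (Matrix.rpowH ρ α * (Matrix.rpowH σ (α - 1))⁻¹)
    have hcont : ContinuousAt (fun ε : ℝ => α / (α - 1) * Real.log β -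
        Real.log (β + Fintype.card ι * ε)) 0 := by
      refine continuousAt_const.sub (ContinuousAt.log (by fun_prop) ?_)
      simpa using hβ0.ne'
    have htend := (hcont.tendsto.mono_left
      (nhdsWithin_le_nhds : nhdsWithin (0 : ℝ) (Set.Ioi 0) ≤ nhds 0))
    have hfin := le_of_tendsto htend (Filter.eventually_of_mem self_mem_nhdsWithin
      (fun ε hε => hlow ε hε))
    refine le_trans (le_of_eq ?_) hfin
    simp only [mul_zero, add_zero]
    field_simp
    ring
  · haveI : Nonempty (Matrix ι ι ℂ) := ⟨0⟩
    exact ciSup_le hub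

end
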